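/- arXiv:2003.09201 — 2 statements merged into one kernel-verified Lean document; each statement's English description precedes it below -/
import Mathlib

section
/- Relation between weight classes: let 0 < γ < n, ω a weight, and p(·), q(·), s(·) ∈ 𝒫(ℝⁿ) with 1/q(x) = 1/p(x) − γ/n, s(x) = (1 − γ/n) q(x), and p₊ < n/γ. Then ω ∈ 𝒜_{p(·),q(·)}^γ (i.e., ‖ω χ_Q‖_{q(·)} ‖ω^{-1} χ_Q‖_{p'(·)} ≤ C |Q|^{1−γ/n} for all cubes Q) if and only if ω^{n/(n−γ)} ∈ 𝒜_{s(·)}, i.e., ‖ω^{n/(n−γ)} χ_Q‖_{s(·)} ‖ω^{-n/(n−γ)} χ_Q‖_{s'(·)} ≤ C|Q| for all cubes Q. -/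
open MeasureTheory ENNReal Set

/-- Axis-parallel cubes in `ℝⁿ`. -/
def IsCube {n : ℕ} (Q : Set (Fin n → ℝ)) : Prop :=
  ∃ (c : Fin n → ℝ) (r : ℝ), 0 < r ∧ Q = Set.univ.pi fun i => Set.Icc (c i) (c i + r)

/-- The Luxemburg norm on the variable exponent Lebesgue space. -/
noncomputable def luxNorm {n : ℕ} (q : (Fin n → ℝ) → ℝ) (f : (Fin n → ℝ) → ℝ) : ℝ :=
  sInf {η : ℝ | 0 < η ∧
    ∫⁻ x, ENNReal.ofReal ((|f x| / η) ^ q x) ∂(volume : Measure (Fin n → ℝ)) ≤ 1}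

theorem lux_pow {n : ℕ} (a : ℝ) (ha : 0 < a) (r f : (Fin n → ℝ) → ℝ) (hf : ∀ x, 0 ≤ f x) :
    luxNorm (fun x => a * r x) (fun x => f x ^ (1 / a)) = luxNorm r f ^ (1 / a) := by
  have ha' : 0 < 1 / a := by positivity
  unfold luxNorm
  set S := {η : ℝ | 0 < η ∧
    ∫⁻ x, ENNReal.ofReal ((|f x| / η) ^ r x) ∂(volume : Measure (Fin n → ℝ)) ≤ 1} with hS
  set S' := {η : ℝ | 0 < η ∧
    ∫⁻ x, ENNReal.ofReal ((|f x ^ (1 / a)| / η) ^ (a * r x))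
      ∂(volume : Measure (Fin n → ℝ)) ≤ 1} with hS'
  have key : ∀ η : ℝ, 0 < η → ∀ x,
      (|f x ^ (1 / a)| / η) ^ (a * r x) = (|f x| / η ^ a) ^ r x := by
    intro η hη x
    have h0 := hf x
    have h1 : 0 ≤ f x ^ (1 / a) := Real.rpow_nonneg h0 _
    rw [abs_of_nonneg h1, abs_of_nonneg h0, Real.rpow_mul (div_nonneg h1 hη.le),
      Real.div_rpow h1 hη.le, ← Real.rpow_mul h0, one_div_mul_cancel ha.ne', Real.rpow_one]
  have mem1 : ∀ η ∈ S', η ^ a ∈ S := by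
    rintro η ⟨h0, h1⟩
    refine ⟨Real.rpow_pos_of_pos h0 _, ?_⟩
    simpa only [key η h0] using h1
  have inv1 : ∀ η : ℝ, 0 ≤ η → (η ^ (1 / a)) ^ a = η := fun η h => by
    rw [← Real.rpow_mul h, one_div_mul_cancel ha.ne', Real.rpow_one]
  have inv2 : ∀ η : ℝ, 0 ≤ η → (η ^ a) ^ (1 / a) = η := fun η h => by
    rw [← Real.rpow_mul h, mul_one_div_cancel ha.ne', Real.rpow_one]
  have mem2 : ∀ η ∈ S, η ^ (1 / a) ∈ S' := by
    rintro η ⟨h0, h1⟩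
    have h2 : 0 < η ^ (1 / a) := Real.rpow_pos_of_pos h0 _
    refine ⟨h2, ?_⟩
    simpa only [key _ h2, inv1 η h0.le] using h1
  have bS : BddBelow S := ⟨0, fun η h => h.1.le⟩
  have bS' : BddBelow S' := ⟨0, fun η h => h.1.le⟩
  have nS : 0 ≤ sInf S := Real.sInf_nonneg fun η h => h.1.le
  have nS' : 0 ≤ sInf S' := Real.sInf_nonneg fun η h => h.1.le
  rcases S.eq_empty_or_nonempty with he | hne
  · have he' : S' = ∅ := by
      by_contra hc
      obtain ⟨η, hη⟩ := Set.nonempty_iff_ne_empty.mpr hc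
      have := mem1 η hη
      rw [he] at this
      exact this
    rw [he, he', Real.sInf_empty, Real.zero_rpow ha'.ne']
  · have hne' : S'.Nonempty := ⟨_, mem2 _ hne.some_mem⟩
    apply le_antisymm
    · have : sInf S' ^ a ≤ sInf S := by
        refine le_csInf hne fun η hη => ?_
        have := Real.rpow_le_rpow nS' (csInf_le bS' (mem2 η hη)) ha.le
        rwa [inv1 η hη.1.le] at this
      have := Real.rpow_le_rpow (Real.rpow_nonneg nS' _) this ha'.le
      rwa [inv2 _ nS'] at this
    · refine le_csInf hne' fun η hη => ?_
      have := Real.rpow_le_rpow nS (csInf_le bS (mem1 η hη)) ha'.le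
      rwa [inv2 η hη.1.le] at this

theorem luxNorm_nonneg' {n : ℕ} (r f : (Fin n → ℝ) → ℝ) : 0 ≤ luxNorm r f :=
  Real.sInf_nonneg fun _ h => h.1.le

/-- relation between weight classes: for `0 < γ < n`,
`1/q = 1/p − γ/n`, `s = (1 − γ/n) q`, `p₊ < n/γ`, a weight `ω` satisfies
`𝒜_{p(·),q(·)}^γ` iff `ω^{n/(n−γ)}` satisfies `𝒜_{s(·)}`. -/
theorem weight_class_relation {n : ℕ} (hn : 0 < n) (γ : ℝ) (hγ0 : 0 < γ) (hγn : γ < n)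
    (p q s : (Fin n → ℝ) → ℝ) (ω : (Fin n → ℝ) → ℝ)
    (hω : ∀ x, 0 < ω x) (hωmeas : Measurable ω)
    (hpmeas : Measurable p) (hqmeas : Measurable q)
    (pm pp : ℝ) (hpm : 1 < pm) (hpb : ∀ x, pm ≤ p x ∧ p x ≤ pp)
    (qm qp : ℝ) (hqm : 1 < qm) (hqb : ∀ x, qm ≤ q x ∧ q x ≤ qp)
    (sm sp : ℝ) (hsm : 1 < sm) (hsb : ∀ x, sm ≤ s x ∧ s x ≤ sp)
    (hpq : ∀ x, 1 / q x = 1 / p x - γ / n)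
    (hs : ∀ x, s x = (1 - γ / n) * q x)
    (hpp : pp < n / γ) :
    (∃ C : ℝ, 0 < C ∧ ∀ Q : Set (Fin n → ℝ), IsCube Q →
      luxNorm q (Q.indicator ω) *
        luxNorm (fun x => p x / (p x - 1)) (Q.indicator fun x => (ω x)⁻¹) ≤
      C * (volume Q).toReal ^ (1 - γ / n)) ↔
    (∃ C : ℝ, 0 < C ∧ ∀ Q : Set (Fin n → ℝ), IsCube Q →
      luxNorm s (Q.indicator fun x => ω x ^ ((n : ℝ) / (n - γ))) *
        luxNorm (fun x => s x / (s x - 1))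
          (Q.indicator fun x => (ω x ^ ((n : ℝ) / (n - γ)))⁻¹) ≤
      C * (volume Q).toReal) := by
  have hn' : (0 : ℝ) < n := by exact_mod_cast hn
  obtain ⟨a, ha⟩ : ∃ a : ℝ, a = 1 - γ / n := ⟨_, rfl⟩
  have hg : γ / n < 1 := (div_lt_one hn').2 hγn
  have ha0 : 0 < a := by linarith
  have ha' : 0 < 1 / a := by positivity
  have hna : (n : ℝ) / (n - γ) = 1 / a := by
    have : (n : ℝ) - γ ≠ 0 := by linarith
    have h2 : a = (n - γ) / n := by rw [ha]; field_simp
    rw [h2, one_div_div]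
  have e1 : s = fun x => a * q x := by
    funext x; rw [hs, ha]
  have e2 : (fun x => s x / (s x - 1)) = fun x => a * (p x / (p x - 1)) := by
    funext x
    have hp : 1 < p x := lt_of_lt_of_le hpm (hpb x).1
    have hq : 1 < q x := lt_of_lt_of_le hqm (hqb x).1
    have hs1 : 1 < s x := lt_of_lt_of_le hsm (hsb x).1
    have h1 : s x = a * q x := by rw [hs, ha]
    have h2 : 1 / q x = 1 / p x - (1 - a) := by rw [hpq, ha]; ring
    have h3 : p x = q x - (1 - a) * (p x * q x) := by
      have hp0 : p x ≠ 0 := by linarith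
      have hq0 : q x ≠ 0 := by linarith
      field_simp at h2
      linarith
    have hs2 : s x - 1 ≠ 0 := by linarith
    have hp2 : p x - 1 ≠ 0 := by linarith
    rw [← mul_div_assoc, div_eq_div_iff hs2 hp2, h1]
    linear_combination a * h3
  have i1 : ∀ Q : Set (Fin n → ℝ), luxNorm s (Q.indicator fun x => ω x ^ ((n : ℝ) / (n - γ))) =
      luxNorm q (Q.indicator ω) ^ (1 / a) := by
    intro Q
    rw [← lux_pow a ha0 _ _ (Set.indicator_nonneg fun x _ => (hω x).le), e1, hna]
    congr 1
    funext x
    by_cases hx : x ∈ Q <;> simp [hx, Real.zero_rpow (inv_ne_zero ha0.ne')]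
  have i2 : ∀ Q : Set (Fin n → ℝ), luxNorm (fun x => s x / (s x - 1))
      (Q.indicator fun x => (ω x ^ ((n : ℝ) / (n - γ)))⁻¹) =
      luxNorm (fun x => p x / (p x - 1)) (Q.indicator fun x => (ω x)⁻¹) ^ (1 / a) := by
    intro Q
    rw [← lux_pow a ha0 _ _ (Set.indicator_nonneg fun x _ => (inv_pos.2 (hω x)).le), e2, hna]
    congr 1
    funext x
    by_cases hx : x ∈ Q <;>
      simp [hx, Real.zero_rpow (inv_ne_zero ha0.ne'), Real.inv_rpow (hω x).le]
  simp only [i1, i2, ← ha]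
  constructor
  · rintro ⟨C, hC, h⟩
    refine ⟨C ^ (1 / a), Real.rpow_pos_of_pos hC _, fun Q hQ => ?_⟩
    have hA := luxNorm_nonneg' q (Q.indicator ω)
    have hB := luxNorm_nonneg' (fun x => p x / (p x - 1)) (Q.indicator fun x => (ω x)⁻¹)
    have := Real.rpow_le_rpow (mul_nonneg hA hB) (h Q hQ) ha'.le
    rwa [Real.mul_rpow hA hB, Real.mul_rpow hC.le (Real.rpow_nonneg ENNReal.toReal_nonneg _),
      ← Real.rpow_mul ENNReal.toReal_nonneg, mul_one_div_cancel ha0.ne', Real.rpow_one] at this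
  · rintro ⟨C, hC, h⟩
    refine ⟨C ^ a, Real.rpow_pos_of_pos hC _, fun Q hQ => ?_⟩
    have hA := luxNorm_nonneg' q (Q.indicator ω)
    have hB := luxNorm_nonneg' (fun x => p x / (p x - 1)) (Q.indicator fun x => (ω x)⁻¹)
    have := Real.rpow_le_rpow (mul_nonneg (Real.rpow_nonneg hA _) (Real.rpow_nonneg hB _))
      (h Q hQ) ha0.le
    rwa [← Real.mul_rpow hA hB, ← Real.rpow_mul (mul_nonneg hA hB), one_div_mul_cancel ha0.ne',
      Real.rpow_one, Real.mul_rpow hC.le ENNReal.toReal_nonneg] at this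
end

section
/- For p(·) ∈ 𝒞^{log}(ℝⁿ) ∩ 𝒫(ℝⁿ) and 1 < β ≤ p₋, the functional a(Q) = |Q|^{1/β − 1} ‖χ_Q‖_{p'(·)} satisfies the T_∞ condition: there is a constant C such that a(Q') ≤ C a(Q) whenever Q' ⊂ Q are cubes. -/
open MeasureTheory ENNReal Set

lemma aux_int {n : ℕ} (q : (Fin n → ℝ) → ℝ) (hq : ∀ x, 1 ≤ q x) (Q : Set (Fin n → ℝ))
    (hQ : MeasurableSet Q) (η : ℝ) :
    ∫⁻ x, ENNReal.ofReal ((|Q.indicator (fun _ => (1:ℝ)) x| / η) ^ q x)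
      ∂(volume : Measure (Fin n → ℝ)) = ∫⁻ x in Q, ENNReal.ofReal ((1 / η) ^ q x) := by
  rw [← lintegral_indicator hQ]
  congr 1
  ext x
  by_cases hx : x ∈ Q
  · simp [hx]
  · have : q x ≠ 0 := by linarith [hq x]
    simp [hx, Real.zero_rpow this]

lemma aux_const_le {n : ℕ} (f : (Fin n → ℝ) → ℝ) (A : Set (Fin n → ℝ)) (hA : MeasurableSet A)
    (a V : ℝ) (ha : 0 ≤ a) (hV : volume A ≤ ENNReal.ofReal V) (hf : ∀ x ∈ A, f x ≤ a) :
    ∫⁻ x in A, ENNReal.ofReal (f x) ≤ ENNReal.ofReal (a * V) := by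
  calc ∫⁻ x in A, ENNReal.ofReal (f x) ≤ ∫⁻ x in A, ENNReal.ofReal a :=
        setLIntegral_mono' hA fun x hx => ENNReal.ofReal_le_ofReal (hf x hx)
    _ = ENNReal.ofReal a * volume A := by simp
    _ ≤ ENNReal.ofReal a * ENNReal.ofReal V := by gcongr
    _ = _ := (ENNReal.ofReal_mul ha).symm

lemma aux_le_const {n : ℕ} (f : (Fin n → ℝ) → ℝ) (A : Set (Fin n → ℝ)) (hA : MeasurableSet A)
    (a V : ℝ) (ha : 0 ≤ a) (hV : ENNReal.ofReal V ≤ volume A) (hf : ∀ x ∈ A, a ≤ f x) :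
    ENNReal.ofReal (a * V) ≤ ∫⁻ x in A, ENNReal.ofReal (f x) := by
  calc ENNReal.ofReal (a * V) = ENNReal.ofReal a * ENNReal.ofReal V := ENNReal.ofReal_mul ha
    _ ≤ ENNReal.ofReal a * volume A := by gcongr
    _ = ∫⁻ x in A, ENNReal.ofReal a := by simp
    _ ≤ _ := setLIntegral_mono' hA fun x hx => ENNReal.ofReal_le_ofReal (hf x hx)

lemma aux_upper {n : ℕ} (q : (Fin n → ℝ) → ℝ) (hq : ∀ x, 1 ≤ q x) (Q A : Set (Fin n → ℝ))
    (hQ : MeasurableSet Q) (hA : MeasurableSet A) (V K B S : ℝ) (hV : 0 < V)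
    (hvol : volume Q = ENNReal.ofReal V) (hK : 1 ≤ K) (hB : 1 ≤ B)
    (h1 : ∀ y ∈ Q ∩ A, V ^ (1 / q y) ≤ K * V ^ S)
    (h2 : ∫⁻ y in Q \ A, ENNReal.ofReal ((1 / V ^ S) ^ q y) ≤ ENNReal.ofReal B) :
    luxNorm q (Q.indicator fun _ => (1:ℝ)) ≤ 2 * K * B * V ^ S := by
  have hVS : 0 < V ^ S := Real.rpow_pos_of_pos hV S
  refine csInf_le ⟨0, fun x hx => hx.1.le⟩ ⟨by positivity, ?_⟩
  rw [aux_int q hq Q hQ, ← lintegral_inter_add_sdiff _ Q hA]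
  have e1 : ∫⁻ x in Q ∩ A, ENNReal.ofReal ((1 / (2 * K * B * V ^ S)) ^ q x)
      ≤ ENNReal.ofReal (1 / (2 * V) * V) := by
    refine aux_const_le _ _ (hQ.inter hA) _ _ (by positivity)
      (hvol ▸ measure_mono inter_subset_left) ?_
    intro y hy
    have hqy := hq y
    have hVq : 0 < V ^ (1 / q y) := Real.rpow_pos_of_pos hV _
    calc (1 / (2 * K * B * V ^ S)) ^ q y ≤ (1 / 2 * (1 / V ^ (1 / q y))) ^ q y := by
          apply Real.rpow_le_rpow (by positivity) _ (by linarith)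
          rw [← one_div_mul_one_div_rev, ← one_div_mul_one_div_rev]
          rw [← one_div_mul_one_div_rev]
          have := h1 y hy
          have h3 : 1 / (K * V ^ S) ≤ 1 / V ^ (1 / q y) := one_div_le_one_div_of_le hVq this
          have h4 : 1 / B ≤ 1 := by rw [div_le_one (by linarith)]; exact hB
          have h5 : 1 / (K * V ^ S) = 1 / V ^ S * (1 / K) := by field_simp
          have h6 : 0 < 1 / V ^ (1 / q y) := by positivity
          have h7 : 0 < 1 / (K * V ^ S) := by positivity
          calc 1 / V ^ S * (1 / B * (1 / K * (1 / 2))) = 1 / 2 * (1 / (K * V ^ S)) * (1 / B) := by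
                rw [h5]; ring
            _ ≤ 1 / 2 * (1 / (K * V ^ S)) * 1 := by gcongr
            _ ≤ _ := by linarith
      _ = (1 / 2) ^ q y * (1 / V) := by
          rw [Real.mul_rpow (by norm_num) (by positivity), Real.div_rpow zero_le_one hVq.le,
            ← Real.rpow_mul hV.le, Real.one_rpow, one_div_mul_cancel (by linarith), Real.rpow_one]
      _ ≤ (1 / 2) ^ (1:ℝ) * (1 / V) := by
          gcongr ?_ * _
          exact Real.rpow_le_rpow_of_exponent_ge (by norm_num) (by norm_num) hqy
      _ = 1 / (2 * V) := by rw [Real.rpow_one]; field_simp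
  have e2 : ∫⁻ x in Q \ A, ENNReal.ofReal ((1 / (2 * K * B * V ^ S)) ^ q x)
      ≤ ENNReal.ofReal (1 / (2 * B) * B) := by
    calc _ ≤ ∫⁻ x in Q \ A, ENNReal.ofReal (1 / (2 * B)) * ENNReal.ofReal ((1 / V ^ S) ^ q x) := by
          refine setLIntegral_mono' (hQ.diff hA) fun y hy => ?_
          rw [← ENNReal.ofReal_mul (by positivity)]
          apply ENNReal.ofReal_le_ofReal
          have hqy := hq y
          have : 1 / (2 * K * B * V ^ S) = 1 / (2 * K * B) * (1 / V ^ S) := by field_simp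
          rw [this, Real.mul_rpow (by positivity) (by positivity)]
          gcongr ?_ * _
          calc (1 / (2 * K * B)) ^ q y ≤ (1 / (2 * K * B)) ^ (1:ℝ) := by
                apply Real.rpow_le_rpow_of_exponent_ge (by positivity) _ hqy
                rw [div_le_one (by positivity)]
                nlinarith
            _ ≤ _ := by
                rw [Real.rpow_one]
                apply one_div_le_one_div_of_le (by positivity)
                nlinarith
      _ = ENNReal.ofReal (1 / (2 * B)) * ∫⁻ x in Q \ A, ENNReal.ofReal ((1 / V ^ S) ^ q x) :=
          lintegral_const_mul' _ _ ENNReal.ofReal_ne_top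
      _ ≤ ENNReal.ofReal (1 / (2 * B)) * ENNReal.ofReal B := by gcongr
      _ = _ := (ENNReal.ofReal_mul (by positivity)).symm
  refine (add_le_add e1 e2).trans ?_
  rw [← ENNReal.ofReal_add (by positivity) (by positivity)]
  have : 1 / (2 * V) * V + 1 / (2 * B) * B = 1 := by field_simp; norm_num
  rw [this, ENNReal.ofReal_one]

lemma aux_lower {n : ℕ} (q : (Fin n → ℝ) → ℝ) (hq : ∀ x, 1 ≤ q x) (Q A : Set (Fin n → ℝ))
    (hQ : MeasurableSet Q) (hA : MeasurableSet A) (hAQ : A ⊆ Q) (V K S : ℝ) (hV : 0 < V)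
    (hvol : volume Q = ENNReal.ofReal V) (hvolA : ENNReal.ofReal (V / 2) ≤ volume A) (hK : 1 ≤ K)
    (h1 : ∀ y ∈ A, V ^ S ≤ K * V ^ (1 / q y)) :
    V ^ S ≤ 4 * K * luxNorm q (Q.indicator fun _ => (1:ℝ)) := by
  have hVS : 0 < V ^ S := Real.rpow_pos_of_pos hV S
  suffices h : V ^ S / (4 * K) ≤ luxNorm q (Q.indicator fun _ => (1:ℝ)) by
    rw [div_le_iff₀ (by positivity)] at h; linarith
  apply le_csInf
  · refine ⟨max 1 V, by positivity, ?_⟩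
    rw [aux_int q hq Q hQ]
    have := aux_const_le (fun x => (1 / max 1 V) ^ q x) Q hQ (1 / max 1 V) V (by positivity) hvol.le
      (fun x _ => by
        have hm : 1 / max 1 V ≤ 1 := by
          rw [div_le_one (by positivity)]; exact le_max_left _ _
        calc (1 / max 1 V) ^ q x ≤ (1 / max 1 V) ^ (1:ℝ) :=
              Real.rpow_le_rpow_of_exponent_ge (by positivity) hm (hq x)
          _ = _ := Real.rpow_one _)
    refine this.trans ?_
    rw [← ENNReal.ofReal_one]
    apply ENNReal.ofReal_le_ofReal
    rw [one_div_mul_eq_div, div_le_one (by positivity)]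
    exact le_max_right _ _
  · rintro η ⟨hη, hint⟩
    rw [aux_int q hq Q hQ] at hint
    by_contra hlt
    push Not at hlt
    have h3 := aux_le_const (fun x => (1 / η) ^ q x) A hA (4 / V) (V / 2) (by positivity) hvolA
      (fun y hy => by
        have hqy := hq y
        have hVq : 0 < V ^ (1 / q y) := Real.rpow_pos_of_pos hV _
        have h4 : η ≤ V ^ (1 / q y) / 4 := by
          refine hlt.le.trans ?_
          rw [div_le_iff₀ (by positivity)]
          linarith [h1 y hy]
        calc 4 / V = 4 ^ (1:ℝ) * (1 / V) := by rw [Real.rpow_one]; ring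
          _ ≤ 4 ^ q y * (1 / V) := by
            gcongr ?_ * _
            exact Real.rpow_le_rpow_of_exponent_le (by norm_num) hqy
          _ = (4 * (1 / V ^ (1 / q y))) ^ q y := by
            rw [Real.mul_rpow (by norm_num) (by positivity), Real.div_rpow zero_le_one hVq.le,
              ← Real.rpow_mul hV.le, Real.one_rpow, one_div_mul_cancel (by linarith),
              Real.rpow_one]
          _ ≤ (1 / η) ^ q y := by
            apply Real.rpow_le_rpow (by positivity) _ (by linarith)
            have := one_div_le_one_div_of_le hη h4
            refine le_trans (le_of_eq ?_) this
            field_simp)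
    have h5 := (h3.trans (lintegral_mono_set hAQ)).trans hint
    have : 4 / V * (V / 2) = 2 := by field_simp; norm_num
    rw [this, ← ENNReal.ofReal_one, ENNReal.ofReal_le_ofReal_iff (by norm_num)] at h5
    norm_num at h5

lemma aux_cube {n : ℕ} (c : Fin n → ℝ) (r : ℝ) (hr : 0 < r) :
    MeasurableSet (Set.univ.pi fun i => Set.Icc (c i) (c i + r)) ∧
    volume (Set.univ.pi fun i => Set.Icc (c i) (c i + r)) = ENNReal.ofReal (r ^ n) := by
  constructor
  · exact MeasurableSet.univ_pi fun i => measurableSet_Icc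
  · rw [volume_pi_pi]
    simp [ENNReal.ofReal_pow hr.le]

lemma aux_dist {n : ℕ} (c : Fin n → ℝ) (r : ℝ) (hr : 0 < r) (x y : Fin n → ℝ)
    (hx : x ∈ Set.univ.pi fun i => Set.Icc (c i) (c i + r))
    (hy : y ∈ Set.univ.pi fun i => Set.Icc (c i) (c i + r)) : dist x y ≤ r := by
  rw [dist_pi_le_iff hr.le]
  intro i
  have h1 := hx i trivial
  have h2 := hy i trivial
  simp only [mem_Icc] at h1 h2
  rw [Real.dist_eq, abs_le]
  constructor <;> linarith

/-- exponent comparison -/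
lemma aux_exp (r : ℝ) (n : ℕ) (hr : 0 < r) (a b M : ℝ) (h : |Real.log r| * |a - b| ≤ M) :
    (r ^ n) ^ a ≤ Real.exp (n * M) * (r ^ n) ^ b := by
  have hV : 0 < r ^ n := by positivity
  rw [Real.rpow_def_of_pos hV, Real.rpow_def_of_pos hV, ← Real.exp_add, Real.exp_le_exp,
    Real.log_pow]
  have h1 : Real.log r * (a - b) ≤ M := by
    rw [← abs_mul] at h; exact (le_abs_self _).trans h
  have h2 : (n:ℝ) * (Real.log r * (a - b)) ≤ n * M := by gcongr
  linarith

lemma aux_s (a b : ℝ) (ha : 1 ≤ a) (hb : 1 ≤ b) : |(1 - 1 / a) - (1 - 1 / b)| ≤ |a - b| := by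
  have h : (1 - 1 / a) - (1 - 1 / b) = (a - b) / (a * b) := by field_simp; ring
  rw [h, abs_div, abs_of_pos (by positivity : 0 < a * b)]
  apply div_le_self (abs_nonneg _)
  nlinarith

/-- for `p(·) ∈ 𝒞^{log}(ℝⁿ) ∩ 𝒫(ℝⁿ)` and `1 < β ≤ p₋`, the
functional `a(Q) = |Q|^{1/β − 1} ‖χ_Q‖_{p'(·)}` satisfies the `T_∞` condition:
`a(Q') ≤ C a(Q)` whenever `Q' ⊂ Q` are cubes. -/
theorem functional_T_infty {n : ℕ} (p : (Fin n → ℝ) → ℝ) (hpmeas : Measurable p)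
    (pm pp : ℝ) (hpm : 1 < pm) (hpb : ∀ x, pm ≤ p x ∧ p x ≤ pp)
    (Cloc : ℝ) (hCloc : 0 < Cloc)
    (hlog : ∀ x y : Fin n → ℝ, dist x y ≤ 1/2 →
      |p x - p y| ≤ Cloc / (-Real.log (dist x y)))
    (pinf : ℝ) (Cinf : ℝ) (hCinf : 0 < Cinf)
    (hinf : ∀ x : Fin n → ℝ, |p x - pinf| ≤ Cinf / Real.log (Real.exp 1 + ‖x‖))
    (β : ℝ) (hβ : 1 < β) (hβp : β ≤ pm) :
    ∃ C : ℝ, 0 < C ∧ ∀ Q Q' : Set (Fin n → ℝ), IsCube Q → IsCube Q' → Q' ⊆ Q →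
      (volume Q').toReal ^ (1 / β - 1) *
          luxNorm (fun x => p x / (p x - 1)) (Q'.indicator fun _ => (1:ℝ)) ≤
        C * ((volume Q).toReal ^ (1 / β - 1) *
          luxNorm (fun x => p x / (p x - 1)) (Q.indicator fun _ => (1:ℝ))) := by
  rcases Nat.eq_zero_or_pos n with hn | hn
  · subst hn
    refine ⟨1, one_pos, ?_⟩
    rintro Q Q' ⟨c, r, hr, rfl⟩ ⟨c', r', hr', rfl⟩ -
    have h1 : (Set.univ.pi fun i => Set.Icc (c' i) (c' i + r')) =
        (Set.univ.pi fun i => Set.Icc (c i) (c i + r)) := by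
      ext x
      constructor <;> intro _ i <;> exact i.elim0
    rw [h1, one_mul]
  have hn0 : n ≠ 0 := hn.ne'
  have hp1 : ∀ x, 1 < p x := fun x => hpm.trans_le (hpb x).1
  have hlogpos : ∀ x : Fin n → ℝ, 0 < Real.log (Real.exp 1 + ‖x‖) := fun x => by
    apply Real.log_pos
    have := Real.add_one_le_exp (1:ℝ)
    have := norm_nonneg x
    linarith
  have hpinf : pm ≤ pinf := by
    by_contra hlt
    push Not at hlt
    have : Nonempty (Fin n) := ⟨⟨0, hn⟩⟩
    have hδ : 0 < pm - pinf := by linarith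
    have h1 := hinf (fun _ => Real.exp (Cinf / (pm - pinf)))
    have h0 := hlogpos (fun _ => Real.exp (Cinf / (pm - pinf)))
    rw [pi_norm_const, Real.norm_eq_abs, Real.abs_exp] at h1 h0
    have h2 : pm - pinf ≤ Cinf / Real.log (Real.exp 1 + Real.exp (Cinf / (pm - pinf))) := by
      refine le_trans ?_ ((le_abs_self _).trans h1)
      linarith [(hpb (fun _ => Real.exp (Cinf / (pm - pinf)))).1]
    rw [le_div_iff₀ h0] at h2
    have h3 : Cinf / (pm - pinf) < Real.log (Real.exp 1 + Real.exp (Cinf / (pm - pinf))) := by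
      rw [Real.lt_log_iff_exp_lt (by positivity)]
      linarith [Real.exp_pos 1]
    rw [div_lt_iff₀ hδ] at h3
    linarith
  set q : (Fin n → ℝ) → ℝ := fun x => p x / (p x - 1) with hqdef
  have hq : ∀ x, 1 ≤ q x := fun x => by
    have := hp1 x
    simp only [hqdef]
    rw [le_div_iff₀ (by linarith)]; linarith
  have hs : ∀ x, 1 / q x = 1 - 1 / p x := fun x => by
    have := hp1 x
    have : p x - 1 ≠ 0 := by linarith
    simp only [hqdef]
    field_simp
  have hsd : ∀ x y, |1 / q x - 1 / q y| ≤ |p x - p y| := fun x y => by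
    rw [hs, hs]; exact aux_s _ _ (hp1 x).le (hp1 y).le
  have hsd1 : ∀ x y, |1 / q x - 1 / q y| ≤ 1 := fun x y => by
    have h1 : ∀ x, 0 ≤ 1 / q x ∧ 1 / q x ≤ 1 := fun x => by
      have := hq x
      refine ⟨by positivity, ?_⟩
      rw [div_le_one (by linarith)]; exact this
    rw [abs_le]
    constructor <;> linarith [(h1 x).1, (h1 x).2, (h1 y).1, (h1 y).2]
  set θ : ℝ := 1 - 1 / pm with hθ
  have hθ0 : 0 < θ := by
    rw [hθ, sub_pos, div_lt_one (by linarith)]; exact hpm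
  set S : ℝ := 1 - 1 / pinf with hS
  have hSθ : θ ≤ S := by
    have : 1 / pinf ≤ 1 / pm := one_div_le_one_div_of_le (by linarith) hpinf
    linarith
  have hγθ : 1 - 1 / β ≤ θ := by
    have : 1 / pm ≤ 1 / β := one_div_le_one_div_of_le (by linarith) hβp
    linarith
  have hθs : ∀ x, θ ≤ 1 / q x := fun x => by
    rw [hs]
    have : 1 / p x ≤ 1 / pm := one_div_le_one_div_of_le (by linarith) (hpb x).1
    linarith
  -- local comparison
  set K1 : ℝ := Real.exp (n * (Cloc + 1)) with hK1d
  have hK1 : 1 ≤ K1 := Real.one_le_exp (by positivity)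
  have hloc : ∀ (r : ℝ), 0 < r → r ≤ 1 → ∀ x y : Fin n → ℝ, dist x y ≤ r →
      (r ^ n) ^ (1 / q x) ≤ K1 * (r ^ n) ^ (1 / q y) := by
    intro r hr hr1 x y hxy
    apply aux_exp r n hr
    have hL : Real.log r ≤ 0 := Real.log_nonpos hr.le hr1
    rw [abs_of_nonpos hL]
    rcases le_or_gt r (1/2) with hr2 | hr2
    · rcases eq_or_ne x y with rfl | hne
      · simp; positivity
      have hd : 0 < dist x y := dist_pos.mpr hne
      have hld : Real.log (dist x y) ≤ Real.log r := Real.log_le_log hd hxy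
      have hlr : Real.log r < 0 := Real.log_neg hr (by linarith)
      have h1 := (hsd x y).trans (hlog x y (hxy.trans hr2))
      have h2 : Cloc / (-Real.log (dist x y)) ≤ Cloc / (-Real.log r) := by
        apply div_le_div_of_nonneg_left hCloc.le (by linarith) (by linarith)
      have h3 := h1.trans h2
      rw [le_div_iff₀ (by linarith)] at h3
      linarith
    · have h1 : -Real.log r ≤ 1 := by
        have : Real.log (1/2) ≤ Real.log r := Real.log_le_log (by norm_num) hr2.le
        rw [one_div, Real.log_inv] at this
        linarith [Real.log_two_lt_d9]
      have := hsd1 x y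
      have h0 := abs_nonneg (1 / q x - 1 / q y)
      nlinarith
  -- global comparison
  set T : ℝ := 1 / θ + 4 with hT
  have hT0 : 0 < T := by positivity
  set K2 : ℝ := Real.exp (n * (T * Cinf)) with hK2d
  have hK2 : 1 ≤ K2 := Real.one_le_exp (by positivity)
  have hglob : ∀ (r : ℝ), 1 ≤ r → ∀ y : Fin n → ℝ,
      Real.log r ≤ T * Real.log (Real.exp 1 + ‖y‖) →
      (r ^ n) ^ (1 / q y) ≤ K2 * (r ^ n) ^ S ∧ (r ^ n) ^ S ≤ K2 * (r ^ n) ^ (1 / q y) := by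
    intro r hr y hy
    have hL : 0 ≤ Real.log r := Real.log_nonneg hr
    have h1 : |1 / q y - S| ≤ Cinf / Real.log (Real.exp 1 + ‖y‖) := by
      rw [hs]; exact (aux_s _ _ (hp1 y).le (by linarith)).trans (hinf y)
    have h2 : |Real.log r| * |1 / q y - S| ≤ T * Cinf := by
      rw [abs_of_nonneg hL]
      have h0 := hlogpos y
      calc Real.log r * |1 / q y - S|
          ≤ (T * Real.log (Real.exp 1 + ‖y‖)) * (Cinf / Real.log (Real.exp 1 + ‖y‖)) := by gcongr
        _ = T * Cinf := by field_simp
    exact ⟨aux_exp r n (by linarith) _ _ _ h2, aux_exp r n (by linarith) _ _ _ (abs_sub_comm _ S ▸ h2)⟩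
  -- small cubes
  have small_up : ∀ (c : Fin n → ℝ) (r : ℝ), 0 < r → r ≤ 1 →
      ∀ x ∈ Set.univ.pi (fun i => Set.Icc (c i) (c i + r)),
      luxNorm q ((Set.univ.pi fun i => Set.Icc (c i) (c i + r)).indicator fun _ => (1:ℝ)) ≤
        2 * K1 * 1 * (r ^ n) ^ (1 / q x) := by
    intro c r hr hr1 x hx
    obtain ⟨hm, hv⟩ := aux_cube c r hr
    refine aux_upper q hq _ Set.univ hm MeasurableSet.univ _ _ _ _ (by positivity) hv hK1 le_rfl ?_ ?_
    · intro y hy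
      exact hloc r hr hr1 y x (aux_dist c r hr y x hy.1 hx)
    · simp
  have small_lo : ∀ (c : Fin n → ℝ) (r : ℝ), 0 < r → r ≤ 1 →
      ∀ x ∈ Set.univ.pi (fun i => Set.Icc (c i) (c i + r)),
      (r ^ n) ^ (1 / q x) ≤ 4 * K1 *
        luxNorm q ((Set.univ.pi fun i => Set.Icc (c i) (c i + r)).indicator fun _ => (1:ℝ)) := by
    intro c r hr hr1 x hx
    obtain ⟨hm, hv⟩ := aux_cube c r hr
    have hV : 0 < r ^ n := by positivity
    refine aux_lower q hq _ _ hm hm le_rfl _ _ _ hV hv ?_ hK1 ?_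
    · rw [hv]; exact ENNReal.ofReal_le_ofReal (by linarith)
    · intro y hy
      exact hloc r hr hr1 x y (aux_dist c r hr x y hx hy)
  have large_up : ∀ (c : Fin n → ℝ) (r : ℝ), 1 ≤ r →
      luxNorm q ((Set.univ.pi fun i => Set.Icc (c i) (c i + r)).indicator fun _ => (1:ℝ)) ≤
        2 * K2 * 2 ^ n * (r ^ n) ^ S := by
    intro c r hr1
    have hr : 0 < r := by linarith
    obtain ⟨hm, hv⟩ := aux_cube c r hr
    have hrθ : 0 < r ^ θ := Real.rpow_pos_of_pos hr _
    have hAm : MeasurableSet (Metric.closedBall (0 : Fin n → ℝ) (r ^ θ))ᶜ :=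
      Metric.isClosed_closedBall.measurableSet.compl
    refine aux_upper q hq _ _ hm hAm _ _ _ _ (by positivity) hv hK2 (one_le_pow₀ (by norm_num)) ?_ ?_
    · intro y hy
      refine (hglob r hr1 y ?_).1
      have h1 : r ^ θ ≤ ‖y‖ := by
        have := hy.2
        simp at this
        exact this.le
      have h2 : Real.log (r ^ θ) ≤ Real.log (Real.exp 1 + ‖y‖) :=
        Real.log_le_log hrθ (by linarith [Real.exp_pos 1])
      rw [Real.log_rpow hr] at h2
      have h0 := hlogpos y
      calc Real.log r = 1 / θ * (θ * Real.log r) := by field_simp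
        _ ≤ 1 / θ * Real.log (Real.exp 1 + ‖y‖) := by gcongr
        _ ≤ _ := by gcongr; linarith
    · have hV1 : 1 ≤ r ^ n := one_le_pow₀ hr1
      have hV : 0 < r ^ n := by positivity
      have := aux_const_le (fun y => (1 / (r ^ n) ^ S) ^ q y)
        ((Set.univ.pi fun i => Set.Icc (c i) (c i + r)) \ (Metric.closedBall (0 : Fin n → ℝ) (r ^ θ))ᶜ)
        (hm.diff hAm) (1 / (r ^ n) ^ θ) ((2 * r ^ θ) ^ n) (by positivity) ?_ ?_
      · refine this.trans (ENNReal.ofReal_le_ofReal (le_of_eq ?_))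
        have : (r ^ n) ^ θ = (r ^ θ) ^ n := by
          rw [← Real.rpow_natCast, ← Real.rpow_natCast, ← Real.rpow_mul hr.le,
            ← Real.rpow_mul hr.le, mul_comm]
        rw [this, mul_pow]
        field_simp
      · refine (measure_mono (t := Metric.closedBall (0 : Fin n → ℝ) (r ^ θ)) ?_).trans ?_
        · intro y hy
          simpa using hy.2
        · rw [Real.volume_pi_closedBall _ hrθ.le]
          simp
      · intro y _
        have h1 : 1 ≤ (r ^ n) ^ S := Real.one_le_rpow hV1 (by linarith)
        calc (1 / (r ^ n) ^ S) ^ q y ≤ (1 / (r ^ n) ^ S) ^ (1:ℝ) := by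
              apply Real.rpow_le_rpow_of_exponent_ge (by positivity) _ (hq y)
              rw [div_le_one (by positivity)]; exact h1
          _ = 1 / (r ^ n) ^ S := Real.rpow_one _
          _ ≤ _ := by
              apply one_div_le_one_div_of_le (by positivity)
              exact Real.rpow_le_rpow_of_exponent_le hV1 hSθ
  have large_lo : ∀ (c : Fin n → ℝ) (r : ℝ), 1 ≤ r → (r ^ n) ^ S ≤ 4 * K2 *
        luxNorm q ((Set.univ.pi fun i => Set.Icc (c i) (c i + r)).indicator fun _ => (1:ℝ)) := by
    intro c r hr1
    have hr : 0 < r := by linarith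
    obtain ⟨hm, hv⟩ := aux_cube c r hr
    have hV : 0 < r ^ n := by positivity
    have hBm : MeasurableSet (Metric.closedBall (0 : Fin n → ℝ) (r / 4)) :=
      Metric.isClosed_closedBall.measurableSet
    refine aux_lower q hq _ ((Set.univ.pi fun i => Set.Icc (c i) (c i + r)) \
      Metric.closedBall (0 : Fin n → ℝ) (r / 4)) hm (hm.diff hBm) sdiff_subset _ _ _ hV hv ?_ hK2 ?_
    · refine le_trans ?_ le_measure_sdiff
      rw [hv, Real.volume_pi_closedBall _ (by positivity), ← ENNReal.ofReal_sub _ (by positivity)]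
      apply ENNReal.ofReal_le_ofReal
      have h1 : (2 * (r / 4)) ^ Fintype.card (Fin n) = r ^ n * (1 / 2) ^ n := by
        rw [← mul_pow, Fintype.card_fin]; ring
      have h2 : ((1:ℝ) / 2) ^ n ≤ 1 / 2 := pow_le_of_le_one (by norm_num) (by norm_num) hn0
      rw [h1]
      nlinarith
    · intro y hy
      refine (hglob r hr1 y ?_).2
      have h1 : r / 4 ≤ ‖y‖ := by
        have := hy.2
        simp at this
        exact this.le
      have h0 := hlogpos y
      have h2 : r ≤ (Real.exp 1 + ‖y‖) ^ 4 := by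
        have hb := one_add_mul_le_pow (a := r / 4) (by linarith) 4
        have : (1 + r / 4) ^ 4 ≤ (Real.exp 1 + ‖y‖) ^ 4 := by
          gcongr
          linarith [Real.add_one_le_exp (1:ℝ)]
        push_cast at hb
        linarith
      have h3 := Real.log_le_log hr h2
      rw [Real.log_pow] at h3
      push_cast at h3
      refine h3.trans ?_
      have : 0 < 1 / θ := by positivity
      gcongr
      linarith
  -- conclusion
  have comb : ∀ V s : ℝ, 0 < V → V ^ (1 / β - 1) * V ^ s = V ^ (s - (1 - 1 / β)) := by
    intro V s hV
    rw [← Real.rpow_add hV]; congr 1; ring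
  set U : ℝ := 2 * (K1 + K2) * 2 ^ n with hU
  set L : ℝ := 4 * (K1 + K2) with hL
  have h2n : (1:ℝ) ≤ 2 ^ n := one_le_pow₀ (by norm_num)
  have hU1 : 2 * K1 * 1 ≤ U := by rw [hU]; nlinarith
  have hU2 : 2 * K2 * 2 ^ n ≤ U := by rw [hU]; gcongr; linarith
  have hU0 : 0 < U := by positivity
  have hL0 : 0 < L := by positivity
  have hlux : ∀ f : (Fin n → ℝ) → ℝ, 0 ≤ luxNorm q f := fun f =>
    Real.sInf_nonneg fun x hx => hx.1.le
  refine ⟨U * L, by positivity, ?_⟩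
  rintro Q Q' ⟨c, r, hr, rfl⟩ ⟨c', r', hr', rfl⟩ hsub
  have hvv := measure_mono (μ := volume) hsub
  rw [(aux_cube c r hr).2, (aux_cube c' r' hr').2, ENNReal.ofReal_le_ofReal_iff (by positivity)] at hvv
  rw [(aux_cube c r hr).2, (aux_cube c' r' hr').2, ENNReal.toReal_ofReal (by positivity),
    ENNReal.toReal_ofReal (by positivity)]
  have hrr : r' ≤ r := le_of_pow_le_pow_left₀ hn0 hr.le hvv
  have hV : 0 < r ^ n := by positivity
  have hV' : 0 < r' ^ n := by positivity
  have hc' : c' ∈ Set.univ.pi (fun i => Set.Icc (c' i) (c' i + r')) := by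
    intro i _
    exact ⟨le_rfl, by linarith⟩
  set N := luxNorm q ((Set.univ.pi fun i => Set.Icc (c i) (c i + r)).indicator fun _ => (1:ℝ))
  set N' := luxNorm q ((Set.univ.pi fun i => Set.Icc (c' i) (c' i + r')).indicator fun _ => (1:ℝ))
  have hN : 0 ≤ N := hlux _
  -- reduction
  have fin : ∀ s s' : ℝ, N' ≤ U * (r' ^ n) ^ s' → (r ^ n) ^ s ≤ L * N →
      (r' ^ n) ^ (s' - (1 - 1 / β)) ≤ (r ^ n) ^ (s - (1 - 1 / β)) →
      (r' ^ n) ^ (1 / β - 1) * N' ≤ U * L * ((r ^ n) ^ (1 / β - 1) * N) := by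
    intro s s' h1 h2 h3
    calc (r' ^ n) ^ (1 / β - 1) * N' ≤ (r' ^ n) ^ (1 / β - 1) * (U * (r' ^ n) ^ s') := by gcongr
      _ = U * ((r' ^ n) ^ (1 / β - 1) * (r' ^ n) ^ s') := by ring
      _ = U * (r' ^ n) ^ (s' - (1 - 1 / β)) := by rw [comb _ _ hV']
      _ ≤ U * (r ^ n) ^ (s - (1 - 1 / β)) := by gcongr
      _ = U * ((r ^ n) ^ (1 / β - 1) * (r ^ n) ^ s) := by rw [comb _ _ hV]
      _ ≤ U * ((r ^ n) ^ (1 / β - 1) * (L * N)) := by gcongr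
      _ = _ := by ring
  rcases le_or_gt r' 1 with h' | h'
  · have hup : N' ≤ U * (r' ^ n) ^ (1 / q c') :=
      (small_up c' r' hr' h' c' hc').trans (by gcongr)
    have hexp : 0 ≤ 1 / q c' - (1 - 1 / β) := by linarith [hθs c']
    rcases le_or_gt r 1 with h | h
    · refine fin (1 / q c') (1 / q c') hup ((small_lo c r hr h c' (hsub hc')).trans ?_) ?_
      · rw [hL]; gcongr; linarith
      · exact Real.rpow_le_rpow hV'.le hvv hexp
    · refine fin S (1 / q c') hup ((large_lo c r h.le).trans ?_) ?_
      · rw [hL]; gcongr; linarith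
      · calc _ ≤ (1:ℝ) := Real.rpow_le_one hV'.le (pow_le_one₀ hr'.le h') hexp
          _ ≤ _ := Real.one_le_rpow (one_le_pow₀ h.le) (by linarith)
  · have h : 1 ≤ r := h'.le.trans hrr
    refine fin S S ((large_up c' r' h'.le).trans (by gcongr)) ((large_lo c r h).trans ?_) ?_
    · rw [hL]; gcongr; linarith
    · exact Real.rpow_le_rpow hV'.le hvv (by linarith)
end
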